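/- Buffer recursion (second inequality of the paper's Lemma 2): fix θ ∈ ℝ^d, buffers g^{(1)},…,g^{(N)} ∈ ℝ^d, and α ∈ (0, p_min) where p_min = min_n p_n. Sample (n̂, x) from the joint distribution Q(n,dx) = p_n ℙ_n(dx) and form the updated buffers ĝ^{(n)} = (1 − α/p_n)·g^{(n)} + (α/p_n)·g(x,θ) if n = n̂, and ĝ^{(n)} = g^{(n)} otherwise. Let G = ∑_{n=1}^N p_n ‖g^{(n)} − g_n(θ*)‖² and G' = ∑_{n=1}^N p_n E[‖ĝ^{(n)} − g_n(θ*)‖²]. Then G' ≤ (1 − α)·G + 3αδ²·‖θ − θ*‖² + α·C₂, where C₂ = ∑_{n=1}^N p_n σ_n² and σ_n² = 2·E_{x∼ℙ_n}[‖g(x,θ*)‖²]. -/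

import Mathlib

open MeasureTheory Finset
open scoped NNReal

/-!
The buffer of cluster `n` is touched only when `n̂ = n`, which has probability `p n`; it then moves
to a convex combination of its old value and the fresh sample with weight `α / p n` on the sample.
By convexity of `‖·‖²` the expected error therefore contracts by the factor `1 - α` at the price of
`α` times the mean squared distance of the sample at `θ` from the mean gradient at `θ*`. Comparing
with the sample at `θ*` costs the Lipschitz term, and what is left is a variance, which is at most
the second moment.
-/

theorem norm_convexComb_sub_sq_le {E : Type*} [NormedAddCommGroup E] [NormedSpace ℝ E] {t : ℝ}
    (ht₀ : 0 ≤ t) (ht₁ : t ≤ 1) (a b c : E) :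
    ‖(1 - t) • a + t • b - c‖ ^ 2 ≤ (1 - t) * ‖a - c‖ ^ 2 + t * ‖b - c‖ ^ 2 := by
  have hcomb : (1 - t) • a + t • b - c = (1 - t) • (a - c) + t • (b - c) := by module
  rw [hcomb]
  exact (convexOn_univ_norm.pow (fun _ _ => norm_nonneg _) 2).2 (Set.mem_univ _) (Set.mem_univ _)
    (sub_nonneg.2 ht₁) ht₀ (sub_add_cancel 1 t)

section Moments

variable {X E : Type*} [MeasurableSpace X] [NormedAddCommGroup E] {μ : Measure X}

theorem memLp_of_ae_dist_le [IsFiniteMeasure μ] {q : ENNReal} {f h : X → E} {r : ℝ}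
    (hf : AEStronglyMeasurable f μ) (hh : MemLp h q μ) (hfh : ∀ᵐ x ∂μ, dist (f x) (h x) ≤ r) :
    MemLp f q μ := by
  have hsub : MemLp (f - h) q μ :=
    .of_bound (hf.sub hh.aestronglyMeasurable) r
      (by simpa only [dist_eq_norm, Pi.sub_apply] using hfh)
  simpa using hsub.add hh

theorem integrable_norm_sub_const_sq [IsFiniteMeasure μ] {f : X → E} (hf : MemLp f 2 μ) (c : E) :
    Integrable (fun x => ‖f x - c‖ ^ 2) μ :=
  (hf.sub (memLp_const c)).integrable_norm_pow two_ne_zero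

variable [IsProbabilityMeasure μ]

theorem integral_const_add_const_mul {f : X → ℝ} (hf : Integrable f μ) (a t : ℝ) :
    ∫ x, (a + t * f x) ∂μ = a + t * ∫ x, f x ∂μ := by
  rw [integral_add (integrable_const _) (hf.const_mul t), integral_const, probReal_univ, one_smul,
    integral_const_mul]

theorem integral_norm_convexComb_sub_sq_le [NormedSpace ℝ E] {f : X → E} (hf : MemLp f 2 μ) {t : ℝ}
    (ht₀ : 0 ≤ t) (ht₁ : t ≤ 1) (a c : E) :
    ∫ x, ‖(1 - t) • a + t • f x - c‖ ^ 2 ∂μ ≤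
      (1 - t) * ‖a - c‖ ^ 2 + t * ∫ x, ‖f x - c‖ ^ 2 ∂μ := by
  have hint := integrable_norm_sub_const_sq hf c
  calc ∫ x, ‖(1 - t) • a + t • f x - c‖ ^ 2 ∂μ
      ≤ ∫ x, ((1 - t) * ‖a - c‖ ^ 2 + t * ‖f x - c‖ ^ 2) ∂μ :=
        integral_mono_of_nonneg (.of_forall fun _ => by positivity)
          ((integrable_const _).add (hint.const_mul _))
          (.of_forall fun x => norm_convexComb_sub_sq_le ht₀ ht₁ a (f x) c)
    _ = (1 - t) * ‖a - c‖ ^ 2 + t * ∫ x, ‖f x - c‖ ^ 2 ∂μ :=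
        integral_const_add_const_mul hint _ _

theorem integral_norm_sub_sq_le_of_ae_dist_le {f h : X → E} {r : ℝ} (hh : MemLp h 2 μ)
    (hfh : ∀ᵐ x ∂μ, dist (f x) (h x) ≤ r) (c : E) :
    ∫ x, ‖f x - c‖ ^ 2 ∂μ ≤ 2 * r ^ 2 + 2 * ∫ x, ‖h x - c‖ ^ 2 ∂μ := by
  have hint := integrable_norm_sub_const_sq hh c
  have hpointwise : ∀ᵐ x ∂μ, ‖f x - c‖ ^ 2 ≤ 2 * r ^ 2 + 2 * ‖h x - c‖ ^ 2 := by
    filter_upwards [hfh] with x hx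
    calc ‖f x - c‖ ^ 2
        ≤ (‖f x - h x‖ + ‖h x - c‖) ^ 2 := by gcongr; exact norm_sub_le_norm_sub_add_norm_sub ..
      _ ≤ (r + ‖h x - c‖) ^ 2 := by gcongr; rwa [← dist_eq_norm]
      _ ≤ 2 * r ^ 2 + 2 * ‖h x - c‖ ^ 2 := add_sq_le.trans_eq (mul_add ..)
  calc ∫ x, ‖f x - c‖ ^ 2 ∂μ
      ≤ ∫ x, (2 * r ^ 2 + 2 * ‖h x - c‖ ^ 2) ∂μ :=
        integral_mono_of_nonneg (.of_forall fun _ => by positivity)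
          ((integrable_const _).add (hint.const_mul _)) hpointwise
    _ = 2 * r ^ 2 + 2 * ∫ x, ‖h x - c‖ ^ 2 ∂μ :=
        integral_const_add_const_mul hint _ _

theorem integral_norm_sub_integral_sq [InnerProductSpace ℝ E] [CompleteSpace E] {f : X → E}
    (hf : MemLp f 2 μ) :
    ∫ x, ‖f x - ∫ y, f y ∂μ‖ ^ 2 ∂μ = ∫ x, ‖f x‖ ^ 2 ∂μ - ‖∫ x, f x ∂μ‖ ^ 2 := by
  have hsq : Integrable (fun x => ‖f x‖ ^ 2) μ := hf.integrable_norm_pow two_ne_zero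
  have hf₁ : Integrable f μ := hf.integrable one_le_two
  have hinner : Integrable (fun x => 2 * inner ℝ (∫ y, f y ∂μ) (f x)) μ :=
    (hf₁.const_inner _).const_mul 2
  have hdiff : Integrable (fun x => ‖f x‖ ^ 2 - 2 * inner ℝ (∫ y, f y ∂μ) (f x)) μ :=
    hsq.sub hinner
  simp only [norm_sub_sq_real, real_inner_comm (∫ y, f y ∂μ)]
  rw [integral_add hdiff (integrable_const _), integral_sub hsq hinner,
    integral_const_mul, integral_inner hf₁, real_inner_self_eq_norm_sq, integral_const,
    probReal_univ, one_smul]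
  ring

theorem integral_norm_sub_integral_sq_le_of_ae_dist_le [InnerProductSpace ℝ E] [CompleteSpace E]
    {f h : X → E} {r : ℝ} (hh : MemLp h 2 μ) (hfh : ∀ᵐ x ∂μ, dist (f x) (h x) ≤ r) :
    ∫ x, ‖f x - ∫ y, h y ∂μ‖ ^ 2 ∂μ ≤ 2 * r ^ 2 + 2 * ∫ x, ‖h x‖ ^ 2 ∂μ := by
  have hdist := integral_norm_sub_sq_le_of_ae_dist_le hh hfh (∫ y, h y ∂μ)
  rw [integral_norm_sub_integral_sq hh] at hdist
  linarith [sq_nonneg ‖∫ y, h y ∂μ‖]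

end Moments

section Buffers

variable {ι X E F : Type*} [Fintype ι] [MeasurableSpace ι] [MeasurableSpace X]

/-- The joint law `Q(n, dx) = p n · P n (dx)` of a cluster label and a sample from that cluster.
Negative weights are truncated to `0`. -/
noncomputable def clusterMixture (p : ι → ℝ) (P : ι → Measure X) : Measure (ι × X) :=
  ∑ n, ENNReal.ofReal (p n) • (P n).map (fun x => (n, x))

/-- The buffers after the sample `z = (n̂, x)` has been observed: buffer `n̂` is averaged with the
sampled gradient `h x`, with weight `α / p n̂` on the latter; the other buffers are kept. -/
noncomputable def bufferUpdate [DecidableEq ι] [AddCommGroup E] [Module ℝ E] (p : ι → ℝ) (α : ℝ)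
    (b : ι → E) (h : X → E) (z : ι × X) (n : ι) : E :=
  if n = z.1 then (1 - α / p n) • b n + (α / p n) • h z.2 else b n

variable [MeasurableSingletonClass ι] [NormedAddCommGroup F] [NormedSpace ℝ F]
  {p : ι → ℝ} {P : ι → Measure X}

theorem integral_clusterMixture {f : ι × X → F} (hp : ∀ n, 0 ≤ p n)
    (hf : ∀ n, Integrable (fun x => f (n, x)) (P n)) :
    ∫ z, f z ∂clusterMixture p P = ∑ n, p n • ∫ x, f (n, x) ∂P n := by
  have hemb (n : ι) : MeasurableEmbedding (Prod.mk n : X → ι × X) :=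
    measurableEmbedding_prodMk_left n
  have hmap (n : ι) : Integrable f ((P n).map (Prod.mk n)) := (hemb n).integrable_map_iff.2 (hf n)
  rw [clusterMixture,
    integral_finsetSum_measure fun n _ => (hmap n).smul_measure ENNReal.ofReal_ne_top]
  refine sum_congr rfl fun n _ => ?_
  rw [integral_smul_measure, (hemb n).integral_map, ENNReal.toReal_ofReal (hp n)]

variable [DecidableEq ι] [∀ n, IsProbabilityMeasure (P n)]

theorem integral_comp_bufferUpdate [CompleteSpace F] [AddCommGroup E] [Module ℝ E]
    (hp : ∀ n, 0 ≤ p n) (hpsum : ∑ n, p n = 1) {α : ℝ} {b : ι → E} {h : X → E} {n : ι} {φ : E → F}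
    (hφ : Integrable (fun x => φ ((1 - α / p n) • b n + (α / p n) • h x)) (P n)) :
    ∫ z, φ (bufferUpdate p α b h z n) ∂clusterMixture p P =
      (1 - p n) • φ (b n) + p n • ∫ x, φ ((1 - α / p n) • b n + (α / p n) • h x) ∂P n := by
  have hself (x : X) : bufferUpdate p α b h (n, x) n = (1 - α / p n) • b n + (α / p n) • h x :=
    if_pos rfl
  have hother {m : ι} (hm : m ≠ n) (x : X) : bufferUpdate p α b h (m, x) n = b n :=
    if_neg hm.symm
  have hint (m : ι) : Integrable (fun x => φ (bufferUpdate p α b h (m, x) n)) (P m) := by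
    rcases eq_or_ne m n with rfl | hm
    · simpa only [hself] using hφ
    · simpa only [hother hm] using integrable_const _
  have hrest : ∑ m ∈ univ.erase n, p m • ∫ x, φ (bufferUpdate p α b h (m, x) n) ∂P m =
      (1 - p n) • φ (b n) := by
    rw [← hpsum, ← sum_erase_eq_sub (mem_univ n), sum_smul]
    refine sum_congr rfl fun m hm => ?_
    simp only [hother (ne_of_mem_erase hm), integral_const, probReal_univ, one_smul]
  rw [integral_clusterMixture hp hint, ← sum_erase_add _ _ (mem_univ n), hrest]
  simp only [hself]

theorem integral_norm_bufferUpdate_sub_sq_le [NormedAddCommGroup E] [NormedSpace ℝ E]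
    (hp : ∀ n, 0 < p n) (hpsum : ∑ n, p n = 1) {α : ℝ} (hα : 0 ≤ α) {n : ι} (hαn : α ≤ p n)
    (b : ι → E) {h : X → E} (hh : MemLp h 2 (P n)) (c : E) :
    ∫ z, ‖bufferUpdate p α b h z n - c‖ ^ 2 ∂clusterMixture p P ≤
      (1 - α) * ‖b n - c‖ ^ 2 + α * ∫ x, ‖h x - c‖ ^ 2 ∂P n := by
  have hmem : MemLp (fun x => (1 - α / p n) • b n + (α / p n) • h x) 2 (P n) :=
    (memLp_const ((1 - α / p n) • b n)).add (hh.const_smul (α / p n))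
  have hpn : p n ≠ 0 := (hp n).ne'
  calc ∫ z, ‖bufferUpdate p α b h z n - c‖ ^ 2 ∂clusterMixture p P
      = (1 - p n) * ‖b n - c‖ ^ 2 +
          p n * ∫ x, ‖(1 - α / p n) • b n + (α / p n) • h x - c‖ ^ 2 ∂P n :=
        integral_comp_bufferUpdate (φ := fun v => ‖v - c‖ ^ 2) (fun m => (hp m).le) hpsum
          (integrable_norm_sub_const_sq hmem c)
    _ ≤ (1 - p n) * ‖b n - c‖ ^ 2 +
          p n * ((1 - α / p n) * ‖b n - c‖ ^ 2 + α / p n * ∫ x, ‖h x - c‖ ^ 2 ∂P n) := by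
        gcongr
        · exact (hp n).le
        · exact integral_norm_convexComb_sub_sq_le hh (div_nonneg hα (hp n).le)
            (div_le_one_of_le₀ hαn (hp n).le) (b n) c
    _ = (1 - α) * ‖b n - c‖ ^ 2 + α * ∫ x, ‖h x - c‖ ^ 2 ∂P n := by
        field_simp
        ring

theorem discover_buffer_recursion_general [NormedAddCommGroup E] [InnerProductSpace ℝ E]
    [CompleteSpace E] {Θ : Type*} [PseudoMetricSpace Θ] (hp : ∀ n, 0 < p n) (hpsum : ∑ n, p n = 1)
    {g : X → Θ → E} {δ : ℝ≥0} (hLip : ∀ n, ∀ᵐ x ∂P n, LipschitzWith δ (g x)) {θs θ : Θ}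
    (hθ : ∀ n, AEStronglyMeasurable (fun x => g x θ) (P n))
    (hθs : ∀ n, MemLp (fun x => g x θs) 2 (P n))
    (b : ι → E) {α : ℝ} (hα : 0 ≤ α) (hαp : ∀ n, α ≤ p n) :
    ∑ n, p n * ∫ z, ‖bufferUpdate p α b (fun x => g x θ) z n - ∫ x, g x θs ∂P n‖ ^ 2
        ∂clusterMixture p P ≤
      (1 - α) * ∑ n, p n * ‖b n - ∫ x, g x θs ∂P n‖ ^ 2 +
        2 * α * (δ : ℝ) ^ 2 * dist θ θs ^ 2 +
        α * ∑ n, p n * (2 * ∫ x, ‖g x θs‖ ^ 2 ∂P n) := by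
  have hdist (n : ι) : ∀ᵐ x ∂P n, dist (g x θ) (g x θs) ≤ δ * dist θ θs :=
    (hLip n).mono fun x hx => hx.dist_le_mul θ θs
  have hcluster (n : ι) :
      ∫ z, ‖bufferUpdate p α b (fun x => g x θ) z n - ∫ x, g x θs ∂P n‖ ^ 2 ∂clusterMixture p P ≤
        (1 - α) * ‖b n - ∫ x, g x θs ∂P n‖ ^ 2 +
          α * (2 * (δ * dist θ θs) ^ 2 + 2 * ∫ x, ‖g x θs‖ ^ 2 ∂P n) :=
    (integral_norm_bufferUpdate_sub_sq_le hp hpsum hα (hαp n) b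
      (memLp_of_ae_dist_le (hθ n) (hθs n) (hdist n)) _).trans <| by
        gcongr
        exact integral_norm_sub_integral_sq_le_of_ae_dist_le (hθs n) (hdist n)
  calc _ ≤ ∑ n, p n * ((1 - α) * ‖b n - ∫ x, g x θs ∂P n‖ ^ 2 +
          α * (2 * (δ * dist θ θs) ^ 2 + 2 * ∫ x, ‖g x θs‖ ^ 2 ∂P n)) :=
        sum_le_sum fun n _ => mul_le_mul_of_nonneg_left (hcluster n) (hp n).le
    _ = (1 - α) * ∑ n, p n * ‖b n - ∫ x, g x θs ∂P n‖ ^ 2 +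
          (∑ n, p n) * (2 * α * (δ : ℝ) ^ 2 * dist θ θs ^ 2) +
          α * ∑ n, p n * (2 * ∫ x, ‖g x θs‖ ^ 2 ∂P n) := by
        simp only [mul_sum, sum_mul, ← sum_add_distrib]
        exact sum_congr rfl fun n _ => by ring
    _ = _ := by rw [hpsum, one_mul]

end Buffers

/-- Buffer recursion (second inequality of the paper's Lemma 2): after one
stochastic buffer update using a sample `(n̂,x)` from `Q(n,dx) = p_n ℙ_n(dx)`, the
weighted buffer error satisfies `G' ≤ (1 − α)G + 3αδ²‖θ − θ*‖² + αC₂`. -/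
theorem discover_buffer_recursion
    {d : ℕ} {X : Type*} [MeasurableSpace X] {N : ℕ}
    (p : Fin N → ℝ) (P : Fin N → Measure X)
    [∀ n, IsProbabilityMeasure (P n)]
    (hp : ∀ n, 0 < p n) (hpsum : ∑ n, p n = 1)
    (g : X → EuclideanSpace ℝ (Fin d) → EuclideanSpace ℝ (Fin d))
    (hgmeas : ∀ θ', Measurable fun x => g x θ')
    (δ : ℝ≥0)
    (hLip : ∀ n, ∀ᵐ x ∂(P n), LipschitzWith δ (g x))
    (gbar : Fin N → EuclideanSpace ℝ (Fin d) → EuclideanSpace ℝ (Fin d))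
    (hgbar : ∀ n θ', gbar n θ' = ∫ x, g x θ' ∂(P n))
    (θs θ : EuclideanSpace ℝ (Fin d))
    -- buffers, step parameter α ∈ (0, p_min)
    (gb : Fin N → EuclideanSpace ℝ (Fin d))
    (α : ℝ) (hα0 : 0 < α) (hαmin : ∀ n, α < p n)
    -- the joint distribution Q on {1,…,N} × 𝒳
    (Q : Measure (Fin N × X))
    (hQ : Q = ∑ n, ENNReal.ofReal (p n) • (P n).map (fun x => (n, x)))
    -- updated buffers after observing the sample z = (n̂, x)
    (gbNew : Fin N × X → Fin N → EuclideanSpace ℝ (Fin d))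
    (hgbNew : ∀ (z : Fin N × X) (n : Fin N),
      gbNew z n = if n = z.1 then
          (1 - α / p n) • gb n + (α / p n) • g z.2 θ
        else gb n)
    -- the in-cluster variances
    (σsq : Fin N → ℝ)
    (hσ : ∀ n, σsq n = 2 * ∫ x, ‖g x θs‖ ^ 2 ∂(P n))
    -- integrability of all stated integrands
    (hint1 : ∀ n, Integrable (fun x => g x θ) (P n))
    (hint2 : ∀ n, Integrable (fun x => g x θs) (P n))
    (hint3 : ∀ n, Integrable (fun x => ‖g x θs‖ ^ 2) (P n))
    (hint4 : ∀ n, Integrable (fun z => ‖gbNew z n - gbar n θs‖ ^ 2) Q) :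
    (∑ n, p n * ∫ z, ‖gbNew z n - gbar n θs‖ ^ 2 ∂Q) ≤
      (1 - α) * (∑ n, p n * ‖gb n - gbar n θs‖ ^ 2) +
        3 * α * (δ : ℝ) ^ 2 * ‖θ - θs‖ ^ 2 + α * ∑ n, p n * σsq n := by
  obtain rfl : gbNew = bufferUpdate p α gb (fun x => g x θ) := funext₂ hgbNew
  subst hQ
  simp only [hgbar, hσ]
  have hθs (n : Fin N) : MemLp (fun x => g x θs) 2 (P n) :=
    (memLp_two_iff_integrable_sq_norm (hint2 n).aestronglyMeasurable).2 (hint3 n)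
  refine (discover_buffer_recursion_general hp hpsum hLip
    (fun n => (hint1 n).aestronglyMeasurable) hθs gb hα0.le fun n => (hαmin n).le).trans ?_
  rw [dist_eq_norm]
  gcongr
  norm_num
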